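/- Let G be a doubly regular tournament on v = 4m−1 vertices (m ≥ 1) containing a transitive subtournament of size s. If √(1+12m) is an integer (i.e., ε := √(1+12m) − ⌊√(1+12m)⌋ = 0), then s ≤ −2 + √(1+12m). -/

import Mathlib

open Matrix Finset

/-- A digraph on `v` vertices, given by its adjacency matrix: entries in `{0,1}`, zero diagonal. -/
def IsDigraph {v : ℕ} (A : Matrix (Fin v) (Fin v) ℂ) : Prop :=
  (∀ x y, A x y = 0 ∨ A x y = 1) ∧ ∀ x, A x x = 0

/-- A tournament: a digraph with `A + Aᵀ = J - I`. -/
def IsTournament {v : ℕ} (A : Matrix (Fin v) (Fin v) ℂ) : Prop :=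
  IsDigraph A ∧ A + Aᵀ = Matrix.of (fun _ _ => 1) - 1

/-- A doubly regular tournament: every vertex dominates exactly `(v-1)/2` vertices and every
pair of distinct vertices jointly dominates exactly `(v-3)/4` vertices (so `v ≡ 3 (mod 4)`). -/
def IsDRT {v : ℕ} (A : Matrix (Fin v) (Fin v) ℂ) : Prop :=
  IsTournament A ∧ v % 4 = 3 ∧
  (∀ x, (univ.filter fun y => A x y = 1).card = (v - 1) / 2) ∧
  (∀ x y, x ≠ y → (univ.filter fun z => A x z = 1 ∧ A y z = 1).card = (v - 3) / 4)

/-- `T` is a transitive subtournament of the digraph with adjacency matrix `A`. -/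
def IsTransSubtournament {v : ℕ} (A : Matrix (Fin v) (Fin v) ℂ) (T : Finset (Fin v)) : Prop :=
  (∀ x ∈ T, ∀ y ∈ T, x ≠ y → Xor' (A x y = 1) (A y x = 1)) ∧
  (∀ x ∈ T, ∀ y ∈ T, ∀ z ∈ T, A x y = 1 → A y z = 1 → A x z = 1)

/-!
For a vertex `z` let `d z` be the number of vertices of `T` that dominate `z`, and put `s = |T|`.
The out-degrees and the numbers of common out-neighbours determine the first two moments of `d`,
which gives `∑ z, (2 * d z - s) ^ 2 = s * (4 * m - s)`. On `T` itself `d` takes each of the values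
`0, …, s - 1` once, so the vertices of `T` alone contribute `s * (s ^ 2 + 2) / 3`. Comparing the
two yields `(s + 1) * (s + 2) ≤ 12 * m`, whence `(s + 1) ^ 2 < 1 + 12 * m`.
-/

theorem three_mul_sum_range_two_mul_sub_sq {R : Type*} [CommRing R] (n : ℕ) (c : R) :
    3 * ∑ i ∈ range n, (2 * (i : R) - c) ^ 2 = n * (n ^ 2 - 1) + 3 * n * (n - 1 - c) ^ 2 := by
  induction n with
  | zero => simp
  | succ n ih =>
    rw [sum_range_succ, mul_add, ih]
    push_cast
    ring

section StrictTotalOrder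

variable {α M : Type*} [AddCommMonoid M]

theorem sum_card_filter_lt_eq_sum_range [Fintype α] [LinearOrder α] (f : ℕ → M) :
    ∑ x : α, f #{y | y < x} = ∑ i ∈ range (Fintype.card α), f i := by
  let e : Fin (Fintype.card α) ≃o α := monoEquivOfFin α rfl
  have card_lt_apply (i : Fin (Fintype.card α)) : #{y | y < e i} = i := by
    rw [← Fin.card_Iio i, ← card_map e.toEquiv.toEmbedding]
    congr 1
    ext x
    simp [← e.symm_apply_lt]
  rw [← Fin.sum_univ_eq_sum_range, ← e.toEquiv.sum_comp]
  exact sum_congr rfl fun i _ => congrArg f (card_lt_apply i)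

theorem sum_card_bipartiteBelow_eq_sum_range {r : α → α → Prop} [DecidableRel r] {T : Finset α}
    (hT : IsStrictTotalOrder T (Subrel r (· ∈ T))) (f : ℕ → M) :
    ∑ z ∈ T, f #(T.bipartiteBelow r z) = ∑ i ∈ range #T, f i := by
  classical
  let := linearOrderOfSTO (Subrel r (· ∈ T))
  have lt_iff (x z : T) : x < z ↔ r x z := Iff.rfl
  have card_lt_coe (z : T) : #{x | x < z} = #(T.bipartiteBelow r z) := by
    rw [← card_map (Function.Embedding.subtype (· ∈ T))]
    congr 1
    ext x
    simp [lt_iff, and_comm]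
  rw [← sum_coe_sort, ← Fintype.card_coe T, ← sum_card_filter_lt_eq_sum_range]
  exact sum_congr rfl fun z _ => congrArg f (card_lt_coe z).symm

end StrictTotalOrder

section DoubleCounting

variable {α β : Type*} [Fintype β] {r : α → β → Prop} [∀ a b, Decidable (r a b)] {T : Finset α}

theorem sum_card_bipartiteBelow_sq_eq_sum_card_inter [DecidableEq β] :
    ∑ z, #(T.bipartiteBelow r z) ^ 2 =
      ∑ x ∈ T, ∑ y ∈ T, #(univ.bipartiteAbove r x ∩ univ.bipartiteAbove r y) := by
  let bothBelow : α × α → β → Prop := fun p z => r p.1 z ∧ r p.2 z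
  calc ∑ z, #(T.bipartiteBelow r z) ^ 2
    _ = ∑ z, #((T ×ˢ T).bipartiteBelow bothBelow z) := by
      simp only [sq, ← card_product, bipartiteBelow, ← filter_product, bothBelow]
    _ = ∑ p ∈ T ×ˢ T, #(univ.bipartiteAbove bothBelow p) :=
      (sum_card_bipartiteAbove_eq_sum_card_bipartiteBelow bothBelow).symm
    _ = ∑ x ∈ T, ∑ y ∈ T, #(univ.bipartiteAbove r x ∩ univ.bipartiteAbove r y) := by
      simp only [sum_product, bipartiteAbove, filter_and, bothBelow]

variable {k l : ℕ}

theorem sum_card_bipartiteBelow_eq_card_mul (hk : ∀ x ∈ T, #(univ.bipartiteAbove r x) = k) :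
    ∑ z, #(T.bipartiteBelow r z) = #T * k := by
  rw [← sum_card_bipartiteAbove_eq_sum_card_bipartiteBelow, sum_const_nat hk]

theorem sum_card_bipartiteBelow_sq_of_card_inter [DecidableEq β]
    (hk : ∀ x ∈ T, #(univ.bipartiteAbove r x) = k)
    (hl : (T : Set α).Pairwise fun x y =>
      #(univ.bipartiteAbove r x ∩ univ.bipartiteAbove r y) = l) :
    (∑ z, #(T.bipartiteBelow r z) ^ 2 : ℤ) = #T * (#T * l + (k - l)) := by
  classical
  have row_sum (x) (hx : x ∈ T) :
      (∑ y ∈ T, #(univ.bipartiteAbove r x ∩ univ.bipartiteAbove r y) : ℤ) = #T * l + (k - l) := by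
    calc (∑ y ∈ T, #(univ.bipartiteAbove r x ∩ univ.bipartiteAbove r y) : ℤ)
      _ = ∑ y ∈ T, ((l : ℤ) + if x = y then (k - l : ℤ) else 0) := by
        refine sum_congr rfl fun y hy => ?_
        split_ifs with hxy
        · rw [← hxy, inter_self, hk x hx]
          ring
        · rw [hl hx hy hxy, add_zero]
      _ = #T * l + (k - l) := by simp [sum_add_distrib, hx]
  calc (∑ z, #(T.bipartiteBelow r z) ^ 2 : ℤ)
    _ = ∑ x ∈ T, ∑ y ∈ T, (#(univ.bipartiteAbove r x ∩ univ.bipartiteAbove r y) : ℤ) :=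
      mod_cast sum_card_bipartiteBelow_sq_eq_sum_card_inter
    _ = #T * (#T * l + (k - l)) := by rw [sum_congr rfl row_sum, sum_const, nsmul_eq_mul]

theorem sum_two_mul_card_bipartiteBelow_sub_card_sq_of_card_inter [DecidableEq β]
    (hk : ∀ x ∈ T, #(univ.bipartiteAbove r x) = k)
    (hl : (T : Set α).Pairwise fun x y =>
      #(univ.bipartiteAbove r x ∩ univ.bipartiteAbove r y) = l) :
    (∑ z, (2 * #(T.bipartiteBelow r z) - #T) ^ 2 : ℤ) =
      4 * #T * (k - l) + #T ^ 2 * (Fintype.card β - 4 * (k - l)) := by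
  have first_moment : (∑ z, #(T.bipartiteBelow r z) : ℤ) = #T * k :=
    mod_cast sum_card_bipartiteBelow_eq_card_mul hk
  have expand (d : ℤ) : (2 * d - #T) ^ 2 = 4 * d ^ 2 - 4 * #T * d + #T ^ 2 := by ring
  simp only [expand, sum_add_distrib, sum_sub_distrib, ← mul_sum, first_moment,
    sum_card_bipartiteBelow_sq_of_card_inter hk hl, sum_const, card_univ, nsmul_eq_mul]
  ring

end DoubleCounting

/-- The relation `r` is doubly regular of order `m`: its out-neighbourhoods form a symmetric
`2`-`(4m - 1, 2m - 1, m - 1)` design. This is a doubly regular tournament without the requirement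
that `r` be a tournament. The counts are shifted by one to avoid truncated subtraction. -/
structure IsDoublyRegular {V : Type*} [Fintype V] (r : V → V → Prop)
    [DecidableRel r] (m : ℕ) : Prop where
  card_add_one : Fintype.card V + 1 = 4 * m
  card_out_add_one (x : V) : #{z | r x z} + 1 = 2 * m
  card_common_out_add_one : Pairwise fun x y => #{z | r x z ∧ r y z} + 1 = m

namespace IsDoublyRegular

variable {V : Type*} [Fintype V] {r : V → V → Prop} [DecidableRel r] {m : ℕ} {T : Finset V}

theorem one_le (hr : IsDoublyRegular r m) : 1 ≤ m := by
  have := hr.card_add_one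
  lia

theorem sum_two_mul_card_bipartiteBelow_sub_card_sq (hr : IsDoublyRegular r m) (T : Finset V) :
    (∑ z, (2 * #(T.bipartiteBelow r z) - #T) ^ 2 : ℤ) = #T * (4 * m - #T) := by
  classical
  have card_out (x) (_ : x ∈ T) : #(univ.bipartiteAbove r x) = 2 * m - 1 :=
    Nat.eq_sub_of_add_eq (hr.card_out_add_one x)
  have card_common : (T : Set V).Pairwise fun x y =>
      #(univ.bipartiteAbove r x ∩ univ.bipartiteAbove r y) = m - 1 := fun x _ y _ hxy => by
    simp only [bipartiteAbove, ← filter_and]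
    exact Nat.eq_sub_of_add_eq (hr.card_common_out_add_one hxy)
  have card_V : (Fintype.card V : ℤ) = 4 * m - 1 :=
    eq_sub_of_add_eq (mod_cast hr.card_add_one)
  have order_eq : ((2 * m - 1 : ℕ) - (m - 1 : ℕ) : ℤ) = m := by
    have := hr.one_le
    lia
  rw [sum_two_mul_card_bipartiteBelow_sub_card_sq_of_card_inter card_out card_common, order_eq,
    card_V]
  ring

theorem card_add_one_mul_card_add_two_le (hr : IsDoublyRegular r m)
    (hT : IsStrictTotalOrder T (Subrel r (· ∈ T))) : (#T + 1) * (#T + 2) ≤ 12 * m := by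
  rcases T.card.eq_zero_or_pos with card_zero | card_pos
  · have := hr.one_le
    rw [card_zero]
    lia
  have sum_inside : 3 * ∑ z ∈ T, (2 * #(T.bipartiteBelow r z) - #T : ℤ) ^ 2 =
      #T * (#T ^ 2 + 2) := by
    rw [sum_card_bipartiteBelow_eq_sum_range hT fun i => (2 * (i : ℤ) - #T) ^ 2,
      three_mul_sum_range_two_mul_sub_sq]
    ring
  have inside_le_total : (#T * (#T ^ 2 + 2) : ℤ) ≤ #T * (3 * (4 * m - #T)) := by
    calc (#T * (#T ^ 2 + 2) : ℤ)
      _ = 3 * ∑ z ∈ T, (2 * #(T.bipartiteBelow r z) - #T : ℤ) ^ 2 := sum_inside.symm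
      _ ≤ 3 * ∑ z, (2 * #(T.bipartiteBelow r z) - #T : ℤ) ^ 2 := by
        gcongr
        exact subset_univ T
      _ = #T * (3 * (4 * m - #T)) := by
        rw [hr.sum_two_mul_card_bipartiteBelow_sub_card_sq]
        ring
  have card_sq_add_two_le : (#T ^ 2 + 2 : ℤ) ≤ 3 * (4 * m - #T) :=
    le_of_mul_le_mul_left inside_le_total (mod_cast card_pos)
  zify
  linarith

theorem card_add_one_lt_sqrt (hr : IsDoublyRegular r m)
    (hT : IsStrictTotalOrder T (Subrel r (· ∈ T))) : (#T + 1 : ℝ) < √(1 + 12 * m) := by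
  have product_le : ((#T + 1) * (#T + 2) : ℝ) ≤ 12 * m :=
    mod_cast hr.card_add_one_mul_card_add_two_le hT
  apply Real.lt_sqrt_of_sq_lt
  linarith [Nat.cast_nonneg (α := ℝ) #T]

end IsDoublyRegular

theorem drt_bound_sqrt_integer_general {V : Type*} [Fintype V] {r : V → V → Prop}
    [DecidableRel r] {m : ℕ} (hr : IsDoublyRegular r m) {T : Finset V}
    (hT : IsStrictTotalOrder T (Subrel r (· ∈ T))) :
    (#T : ℝ) ≤ -2 + ⌈√(1 + 12 * (m : ℝ))⌉ := by
  have card_add_one_lt_ceil : (#T + 1 : ℤ) < ⌈√(1 + 12 * (m : ℝ))⌉ :=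
    Int.lt_ceil.mpr (mod_cast hr.card_add_one_lt_sqrt hT)
  have : (#T + 1 + 1 : ℝ) ≤ ⌈√(1 + 12 * (m : ℝ))⌉ := mod_cast card_add_one_lt_ceil
  linarith

/-- The arc relation of the digraph with adjacency matrix `A`. -/
def Dominates {v : ℕ} (A : Matrix (Fin v) (Fin v) ℂ) (x y : Fin v) : Prop := A x y = 1

noncomputable instance {v : ℕ} (A : Matrix (Fin v) (Fin v) ℂ) : DecidableRel (Dominates A) :=
  fun x y => inferInstanceAs (Decidable (A x y = 1))

theorem IsDRT.isDoublyRegular {v m : ℕ} {A : Matrix (Fin v) (Fin v) ℂ} (hA : IsDRT A)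
    (hv : v + 1 = 4 * m) : IsDoublyRegular (Dominates A) m := by
  obtain ⟨-, -, card_out, card_common⟩ := hA
  exact
    { card_add_one := by rw [Fintype.card_fin, hv]
      card_out_add_one := fun x => (congrArg (· + 1) (card_out x)).trans (by lia)
      card_common_out_add_one := fun x y hxy =>
        (congrArg (· + 1) (card_common x y hxy)).trans (by lia) }

theorem IsTransSubtournament.isStrictTotalOrder {v : ℕ} {A : Matrix (Fin v) (Fin v) ℂ}
    {T : Finset (Fin v)} (hT : IsTransSubtournament A T) (hA : IsDigraph A) :
    IsStrictTotalOrder T (Subrel (Dominates A) (· ∈ T)) where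
  irrefl x := by simp [Dominates, hA.2]
  trans x y z := hT.2 x x.2 y y.2 z z.2
  trichotomous x y hxy hyx := by
    by_contra hne
    exact (Xor.or (hT.1 x x.2 y y.2 (Subtype.coe_ne_coe.mpr hne))).elim hxy hyx

/-- If a doubly regular tournament on `v = 4m-1` vertices contains a transitive
subtournament of size `s` and `√(1+12m)` is an integer, then `s ≤ -2 + √(1+12m)`. -/
theorem drt_bound_sqrt_integer
    {m s : ℕ} (hm : 1 ≤ m)
    (A : Matrix (Fin (4 * m - 1)) (Fin (4 * m - 1)) ℂ) (hA : IsDRT A)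
    (T : Finset (Fin (4 * m - 1))) (hT : IsTransSubtournament A T) (hTcard : T.card = s)
    (heps : Real.sqrt (1 + 12 * (m : ℝ)) - (⌊Real.sqrt (1 + 12 * (m : ℝ))⌋ : ℝ) = 0) :
    (s : ℝ) ≤ -2 + Real.sqrt (1 + 12 * (m : ℝ)) := by
  have ceil_eq : (⌈√(1 + 12 * (m : ℝ))⌉ : ℝ) = √(1 + 12 * (m : ℝ)) :=
    (Int.ceil_eq_self_iff_mem _).mpr (Int.fract_eq_zero_iff.mp heps)
  rw [← hTcard, ← ceil_eq]
  exact drt_bound_sqrt_integer_general (hA.isDoublyRegular (by lia))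
    (hT.isStrictTotalOrder hA.1.1)
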